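/- arXiv:2412.20893 — 2 statements merged into one kernel-verified Lean document; each statement's English description precedes it below -/
import Mathlib

section
/- Let N ≥ 1 and let U and U' be N×N complex unitary matrices. Then |⟨U·φ, U'·φ⟩|² = 1 holds for every unit vector φ ∈ ℂ^N if and only if there exists c ∈ ℂ with |c| = 1 such that U' = c • U. -/
open scoped InnerProductSpace

/-!
Equality in the Cauchy-Schwarz inequality makes `T φ` a multiple of `S φ` for every `φ`, by a factor
that may a priori depend on `φ`. Since `S` is injective, `S⁻¹ ∘ T` is then an endomorphism of the
source which sends every vector to a multiple of itself, hence a homothety.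
-/

theorem exists_eq_smul_of_forall_exists_apply_eq_smul {R V W : Type*} [CommRing R] [IsDomain R]
    [AddCommGroup V] [Module R V] [Module.Free R V] [AddCommGroup W] [Module R W]
    {f g : V →ₗ[R] W} (hf : Function.Injective f) (h : ∀ v, ∃ r : R, g v = r • f v) :
    ∃ c : R, g = c • f := by
  have hrange : ∀ v, g v ∈ f.range := fun v ↦ by
    obtain ⟨r, hr⟩ := h v
    exact hr ▸ f.range.smul_mem r (f.mem_range_self v)
  let p : V →ₗ[R] V := (LinearEquiv.ofInjective f hf).symm ∘ₗ g.codRestrict f.range hrange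
  have hfp (v : V) : f (p v) = g v :=
    congrArg Subtype.val ((LinearEquiv.ofInjective f hf).apply_symm_apply ⟨g v, hrange v⟩)
  have hdep (v : V) : ¬ LinearIndependent R ![v, p v] := fun hli ↦ by
    obtain ⟨r, hr⟩ := h v
    have hpv : p v = r • v := hf (by rw [hfp, hr, map_smul])
    have hrel : r • v + (-1 : R) • p v = 0 := by rw [hpv, neg_one_smul, add_neg_cancel]
    exact neg_ne_zero.2 one_ne_zero (LinearIndependent.pair_iff.1 hli r (-1) hrel).2
  obtain ⟨c, hc⟩ := LinearMap.exists_eq_smul_id_of_forall_notLinearIndependent hdep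
  refine ⟨c, LinearMap.ext fun v ↦ ?_⟩
  rw [← hfp, hc]
  exact map_smul f c v

theorem norm_eq_one_of_linearIsometry_eq_smul {𝕜 E F : Type*} [NormedField 𝕜] [NormedAddCommGroup E]
    [NormedSpace 𝕜 E] [Nontrivial E] [SeminormedAddCommGroup F] [NormedSpace 𝕜 F]
    {S T : E →ₗᵢ[𝕜] F} {c : 𝕜} (h : T.toLinearMap = c • S.toLinearMap) : ‖c‖ = 1 := by
  obtain ⟨v, hv⟩ := exists_ne (0 : E)
  have hnorm : ‖c‖ * ‖v‖ = ‖v‖ :=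
    calc ‖c‖ * ‖v‖ = ‖c • S v‖ := by rw [norm_smul, S.norm_map]
      _ = ‖T v‖ := congrArg norm (LinearMap.congr_fun h v).symm
      _ = ‖v‖ := T.norm_map v
  exact (mul_eq_right₀ (norm_ne_zero_iff.2 hv)).1 hnorm

section InnerProductSpace

variable {𝕜 E F : Type*} [RCLike 𝕜]

theorem forall_exists_apply_eq_smul_of_norm_eq_one [NormedAddCommGroup E] [NormedSpace 𝕜 E]
    [AddCommGroup F] [Module 𝕜 F] {f g : E →ₗ[𝕜] F}
    (h : ∀ φ, ‖φ‖ = 1 → ∃ r : 𝕜, g φ = r • f φ) (v : E) : ∃ r : 𝕜, g v = r • f v := by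
  rcases eq_or_ne v 0 with rfl | hv
  · exact ⟨0, by rw [map_zero, zero_smul]⟩
  · obtain ⟨r, hr⟩ := h _ (norm_smul_inv_norm (𝕜 := 𝕜) hv)
    have hnorm : (‖v‖⁻¹ : 𝕜) ≠ 0 := inv_ne_zero (RCLike.ofReal_ne_zero.2 (norm_ne_zero_iff.2 hv))
    rw [map_smul, map_smul, smul_comm r] at hr
    exact ⟨r, smul_right_injective F hnorm hr⟩

variable [NormedAddCommGroup E] [NormedAddCommGroup F] [InnerProductSpace 𝕜 F]

theorem norm_inner_sq_eq_one_iff_exists_eq_smul {x y : F} (hx : ‖x‖ = 1) (hy : ‖y‖ = 1) :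
    ‖⟪x, y⟫_𝕜‖ ^ 2 = 1 ↔ ∃ r : 𝕜, y = r • x := by
  have hx₀ : x ≠ 0 := norm_ne_zero_iff.1 (hx ▸ one_ne_zero)
  calc ‖⟪x, y⟫_𝕜‖ ^ 2 = 1
      ↔ ‖⟪x, y⟫_𝕜‖ = ‖x‖ * ‖y‖ := by
        rw [hx, hy, mul_one, pow_eq_one_iff_of_nonneg (norm_nonneg _) two_ne_zero]
    _ ↔ x = 0 ∨ ∃ r : 𝕜, y = r • x := (norm_inner_eq_norm_tfae 𝕜 x y).out 0 2
    _ ↔ ∃ r : 𝕜, y = r • x := or_iff_right hx₀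

theorem fidelity_one_iff_global_phase_general [NormedSpace 𝕜 E] (S T : E →ₗᵢ[𝕜] F) :
    (∀ φ, ‖φ‖ = 1 → ‖⟪S φ, T φ⟫_𝕜‖ ^ 2 = 1) ↔
      ∃ c : 𝕜, ‖c‖ = 1 ∧ T.toLinearMap = c • S.toLinearMap := by
  have hfid (φ : E) (hφ : ‖φ‖ = 1) : ‖⟪S φ, T φ⟫_𝕜‖ ^ 2 = 1 ↔ ∃ r : 𝕜, T φ = r • S φ :=
    norm_inner_sq_eq_one_iff_exists_eq_smul ((S.norm_map φ).trans hφ) ((T.norm_map φ).trans hφ)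
  constructor
  · intro h
    obtain ⟨c, hc⟩ := exists_eq_smul_of_forall_exists_apply_eq_smul S.injective <|
      forall_exists_apply_eq_smul_of_norm_eq_one (g := T.toLinearMap)
        fun φ hφ ↦ (hfid φ hφ).1 (h φ hφ)
    rcases subsingleton_or_nontrivial E with _ | _
    · exact ⟨1, norm_one, Subsingleton.elim _ _⟩
    · exact ⟨c, norm_eq_one_of_linearIsometry_eq_smul hc, hc⟩
  · rintro ⟨c, -, hc⟩ φ hφ
    exact (hfid φ hφ).2 ⟨c, LinearMap.congr_fun hc φ⟩

end InnerProductSpace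

section Matrix

variable {𝕜 m n : Type*} [RCLike 𝕜] [Fintype m] [Fintype n] [DecidableEq n]

theorem inner_toEuclideanLin_toEuclideanLin {k : Type*} [Fintype k] [DecidableEq k]
    (A : Matrix m n 𝕜) (B : Matrix m k 𝕜) (x : EuclideanSpace 𝕜 n) (y : EuclideanSpace 𝕜 k) :
    ⟪A.toEuclideanLin x, B.toEuclideanLin y⟫_𝕜 =
      ⟪x, (A.conjTranspose * B).toEuclideanLin y⟫_𝕜 := by
  classical
  rw [Matrix.toLpLin_mul (q := 2), LinearMap.comp_apply,
    Matrix.toEuclideanLin_conjTranspose_eq_adjoint, LinearMap.adjoint_inner_right]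

/-- The isometry `x ↦ A x` of Euclidean spaces given by a possibly rectangular matrix `A` with
orthonormal columns; it carries results on linear isometries over to unitary matrices. -/
noncomputable def euclideanIsometry (A : Matrix m n 𝕜) (hA : A.conjTranspose * A = 1) :
    EuclideanSpace 𝕜 n →ₗᵢ[𝕜] EuclideanSpace 𝕜 m :=
  A.toEuclideanLin.isometryOfInner fun x y ↦ by
    rw [inner_toEuclideanLin_toEuclideanLin, hA, Matrix.toLpLin_one, LinearMap.id_apply]

theorem euclideanIsometry_apply (A : Matrix m n 𝕜) (hA : A.conjTranspose * A = 1)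
    (x : EuclideanSpace 𝕜 n) : euclideanIsometry A hA x = WithLp.toLp 2 (A.mulVec x) :=
  rfl

theorem euclideanIsometry_toLinearMap (A : Matrix m n 𝕜) (hA : A.conjTranspose * A = 1) :
    (euclideanIsometry A hA).toLinearMap = A.toEuclideanLin :=
  rfl

theorem euclideanIsometry_toLinearMap_eq_smul_iff {A B : Matrix m n 𝕜}
    (hA : A.conjTranspose * A = 1) (hB : B.conjTranspose * B = 1) (c : 𝕜) :
    (euclideanIsometry B hB).toLinearMap = c • (euclideanIsometry A hA).toLinearMap ↔
      B = c • A := by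
  rw [euclideanIsometry_toLinearMap, euclideanIsometry_toLinearMap, ← map_smul,
    EmbeddingLike.apply_eq_iff_eq]

end Matrix

/-- Soundness and completeness of the equivalence-checking framework: for
unitaries `U, U'`, the fidelity `|⟨Uφ, U'φ⟩|²` equals `1` on every unit vector
`φ` iff `U'` is a unimodular scalar multiple of `U` (equivalence up to a global
phase). -/
theorem fidelity_one_iff_global_phase
    (N : ℕ) (hN : 1 ≤ N) (U U' : Matrix (Fin N) (Fin N) ℂ)
    (hU : U ∈ Matrix.unitaryGroup (Fin N) ℂ)
    (hU' : U' ∈ Matrix.unitaryGroup (Fin N) ℂ) :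
    (∀ φ : EuclideanSpace ℂ (Fin N), ‖φ‖ = 1 →
        ‖(inner (𝕜 := ℂ) (E := EuclideanSpace ℂ (Fin N))
            (WithLp.toLp 2 (U.mulVec φ)) (WithLp.toLp 2 (U'.mulVec φ)) : ℂ)‖ ^ 2 = 1) ↔
      ∃ c : ℂ, ‖c‖ = 1 ∧ U' = c • U := by
  simpa only [euclideanIsometry_apply, euclideanIsometry_toLinearMap_eq_smul_iff] using
    fidelity_one_iff_global_phase_general
      (euclideanIsometry U (Matrix.mem_unitaryGroup_iff'.1 hU))
      (euclideanIsometry U' (Matrix.mem_unitaryGroup_iff'.1 hU'))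
end

section
/- Let N ≥ 1, let T be a subset of {0, …, N−1}, and let D be an N×N complex unitary matrix such that D·e_j = e_j for every standard basis vector e_j with j ∉ T. Then for every unit vector φ ∈ ℂ^N, the failure probability satisfies 1 − |⟨φ, D·φ⟩|² ≤ 4 · Σ_{j ∈ T} |φ_j|², where ⟨·,·⟩ is the standard Hermitian inner product on ℂ^N. -/
open scoped InnerProductSpace

/-!
Let `D` be a contraction of a Hilbert space fixing `a`. Its adjoint fixes `a` too, so
`⟪a, x - D x⟫ = 0` for all `x`. With `b = φ - a` we have `φ - D φ = b - D b`, hence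
`⟪φ, φ - D φ⟫ = ⟪b, b - D b⟫`, which is at most `2 ‖b‖ ^ 2` in modulus. The bound on
`1 - |⟪φ, D φ⟫| ^ 2` follows from `1 - t ^ 2 ≤ 2 (1 - t)`. For `a` one takes the part of `φ`
supported off `T`, so that `‖b‖ ^ 2` is the mass of `φ` on `T`.
-/

lemma norm_sub_apply_le_two_mul {𝕜 E : Type*} [NontriviallyNormedField 𝕜]
    [SeminormedAddCommGroup E] [NormedSpace 𝕜 E] {D : E →L[𝕜] E} (hD : ‖D‖ ≤ 1) (x : E) :
    ‖x - D x‖ ≤ 2 * ‖x‖ :=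
  calc ‖x - D x‖ ≤ ‖x‖ + ‖D x‖ := norm_sub_le x (D x)
    _ ≤ ‖x‖ + 1 * ‖x‖ := by gcongr; exact D.le_of_opNorm_le hD x
    _ = 2 * ‖x‖ := by ring

section Contraction

variable {𝕜 E : Type*} [RCLike 𝕜] [NormedAddCommGroup E] [InnerProductSpace 𝕜 E]
  [CompleteSpace E] {D : E →L[𝕜] E} {a : E}

lemma adjoint_apply_eq_self_of_norm_le_one (hD : ‖D‖ ≤ 1) (ha : D a = a) :
    D.adjoint a = a := by
  refine eq_of_norm_le_re_inner_eq_norm_sq (𝕜 := 𝕜) ?_ ?_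
  · have hD' : ‖D.adjoint‖ ≤ 1 := (LinearIsometryEquiv.norm_map _ D).trans_le hD
    simpa only [one_mul] using D.adjoint.le_of_opNorm_le hD' a
  · rw [D.adjoint_inner_left, ha, inner_self_eq_norm_sq]

lemma inner_sub_apply_eq_zero_of_apply_eq_self (hD : ‖D‖ ≤ 1) (ha : D a = a) (x : E) :
    ⟪a, x - D x⟫_𝕜 = 0 := by
  rw [inner_sub_right, ← D.adjoint_inner_left, adjoint_apply_eq_self_of_norm_le_one hD ha,
    sub_self]

lemma norm_inner_sub_apply_le_of_apply_eq_self (hD : ‖D‖ ≤ 1) (ha : D a = a) (φ : E) :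
    ‖⟪φ, φ - D φ⟫_𝕜‖ ≤ 2 * ‖φ - a‖ ^ 2 := by
  have hsub : φ - D φ = (φ - a) - D (φ - a) := by rw [map_sub, ha, sub_sub_sub_cancel_right]
  calc ‖⟪φ, φ - D φ⟫_𝕜‖ = ‖⟪φ - a, φ - D φ⟫_𝕜‖ := by
        rw [inner_sub_left, inner_sub_apply_eq_zero_of_apply_eq_self hD ha, sub_zero]
    _ = ‖⟪φ - a, (φ - a) - D (φ - a)⟫_𝕜‖ := by rw [← hsub]
    _ ≤ ‖φ - a‖ * ‖(φ - a) - D (φ - a)‖ := norm_inner_le_norm _ _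
    _ ≤ ‖φ - a‖ * (2 * ‖φ - a‖) := by gcongr; exact norm_sub_apply_le_two_mul hD _
    _ = 2 * ‖φ - a‖ ^ 2 := by ring

lemma one_sub_norm_inner_apply_sq_le_of_apply_eq_self (hD : ‖D‖ ≤ 1) (ha : D a = a) {φ : E}
    (hφ : ‖φ‖ = 1) :
    1 - ‖⟪φ, D φ⟫_𝕜‖ ^ 2 ≤ 4 * ‖φ - a‖ ^ 2 := by
  have hsub : ⟪φ, φ - D φ⟫_𝕜 = 1 - ⟪φ, D φ⟫_𝕜 := by
    rw [inner_sub_right, inner_self_eq_one_of_norm_eq_one hφ]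
  have hoverlap : 1 - ‖⟪φ, D φ⟫_𝕜‖ ≤ 2 * ‖φ - a‖ ^ 2 :=
    calc 1 - ‖⟪φ, D φ⟫_𝕜‖ ≤ ‖1 - ⟪φ, D φ⟫_𝕜‖ := by
          simpa only [norm_one] using norm_sub_norm_le (1 : 𝕜) ⟪φ, D φ⟫_𝕜
      _ ≤ 2 * ‖φ - a‖ ^ 2 := hsub ▸ norm_inner_sub_apply_le_of_apply_eq_self hD ha φ
  linarith [sq_nonneg (1 - ‖⟪φ, D φ⟫_𝕜‖)]

end Contraction

section Basis

variable {𝕜 E ι : Type*} [RCLike 𝕜] [NormedAddCommGroup E] [InnerProductSpace 𝕜 E]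

lemma norm_sq_sum_smul_of_orthonormal {e : ι → E} (he : Orthonormal 𝕜 e) (c : ι → 𝕜)
    (T : Finset ι) : ‖∑ j ∈ T, c j • e j‖ ^ 2 = ∑ j ∈ T, ‖c j‖ ^ 2 := by
  simpa using he.orthogonalFamily.norm_sum c T

lemma apply_sub_sum_eq_self_of_forall_notMem (e : HilbertBasis ι 𝕜 E) {D : E →L[𝕜] E}
    {T : Finset ι} (hfix : ∀ j ∉ T, D (e j) = e j) (x : E) :
    D (x - ∑ j ∈ T, ⟪e j, x⟫_𝕜 • e j) = x - ∑ j ∈ T, ⟪e j, x⟫_𝕜 • e j := by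
  let R : E →L[𝕜] E := D - 1
  have hvanish : ∀ j ∉ T, R (⟪e j, x⟫_𝕜 • e j) = 0 := fun j hj => by
    simp [R, hfix j hj]
  have hexpand : HasSum (fun j => R (⟪e j, x⟫_𝕜 • e j)) (R x) := by
    simpa only [e.repr_apply_apply] using (e.hasSum_repr x).mapL R
  have hR : R x = R (∑ j ∈ T, ⟪e j, x⟫_𝕜 • e j) := by
    rw [map_sum]
    exact hexpand.unique (hasSum_sum_of_ne_finset_zero hvanish)
  exact sub_eq_zero.mp (show R _ = 0 by rw [map_sub, hR, sub_self])

theorem pFailure_le_four_mul_mass_on_support_general [CompleteSpace E]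
    (e : HilbertBasis ι 𝕜 E) (T : Finset ι) {D : E →L[𝕜] E} (hD : ‖D‖ ≤ 1)
    (hfix : ∀ j ∉ T, D (e j) = e j) {φ : E} (hφ : ‖φ‖ = 1) :
    1 - ‖⟪φ, D φ⟫_𝕜‖ ^ 2 ≤ 4 * ∑ j ∈ T, ‖⟪e j, φ⟫_𝕜‖ ^ 2 := by
  have hbound := one_sub_norm_inner_apply_sq_le_of_apply_eq_self hD
    (apply_sub_sum_eq_self_of_forall_notMem e hfix φ) hφ
  rwa [sub_sub_cancel, norm_sq_sum_smul_of_orthonormal e.orthonormal] at hbound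

end Basis

lemma norm_le_one_of_mem_unitary {A : Type*} [NormedRing A] [StarRing A] [CStarRing A] {u : A}
    (hu : u ∈ unitary A) : ‖u‖ ≤ 1 := by
  cases subsingleton_or_nontrivial A
  · simp [Subsingleton.elim u 0]
  · exact (CStarRing.norm_of_mem_unitary hu).le

/-- Worst-case detection bound: if a unitary `D` fixes every standard basis
vector `e j` with `j ∉ T`, then for every unit state `φ` the failure
probability `1 − |⟨φ, D φ⟩|²` is at most `4 · ∑_{j ∈ T} |φ j|²`. -/
theorem pFailure_le_four_mul_mass_on_support
    (N : ℕ) (hN : 1 ≤ N) (T : Finset (Fin N))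
    (D : Matrix (Fin N) (Fin N) ℂ)
    (hU : D ∈ Matrix.unitaryGroup (Fin N) ℂ)
    (hfix : ∀ j : Fin N, j ∉ T →
      D.mulVec (EuclideanSpace.single j (1 : ℂ)) = EuclideanSpace.single j 1) :
    ∀ φ : EuclideanSpace ℂ (Fin N), ‖φ‖ = 1 →
      1 - ‖(⟪φ, (WithLp.toLp 2 (D.mulVec φ) : EuclideanSpace ℂ (Fin N))⟫_ℂ : ℂ)‖ ^ 2 ≤
        4 * ∑ j ∈ T, ‖φ j‖ ^ 2 := by
  intro φ hφ
  have hD : ‖Matrix.toEuclideanCLM (𝕜 := ℂ) D‖ ≤ 1 :=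
    norm_le_one_of_mem_unitary (Unitary.map_mem Matrix.toEuclideanCLM hU)
  have hfix' : ∀ j ∉ T, Matrix.toEuclideanCLM (𝕜 := ℂ) D (EuclideanSpace.single j 1) =
      EuclideanSpace.single j 1 := fun j hj => congrArg (WithLp.toLp 2) (hfix j hj)
  simpa only [← Matrix.toEuclideanCLM_toLp, WithLp.toLp_ofLp, OrthonormalBasis.coe_toHilbertBasis,
    EuclideanSpace.basisFun_apply, EuclideanSpace.inner_single_left, map_one, one_mul] using
    pFailure_le_four_mul_mass_on_support_general
      (EuclideanSpace.basisFun (Fin N) ℂ).toHilbertBasis T hD (by simpa using hfix') hφ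
end
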